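/- arXiv:1509.07081 — 5 statements merged into one kernel-verified Lean document; each statement's English description precedes it below -/
import Mathlib

section
/- Let E be a stable L^0(F)-module and let 𝒯 be a topology on E making E[𝒯] a topological L^0-module. Then 𝒯 is stably induced by some family of L^0-seminorms if and only if there is a neighborhood base 𝒰 of 0 ∈ E for 𝒯 such that (1) every U ∈ 𝒰 is L^0-convex, L^0-absorbent, L^0-balanced and stable, and (2) for every partition {A_k} of Ω and every sequence {U_k} ⊆ 𝒰 one has Σ_k 1_{A_k}U_k ∈ 𝒰. -/
open MeasureTheory Filter

noncomputable section

namespace L0Module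

variable {Ω : Type*} [MeasurableSpace Ω] (P : Measure Ω)

/-- The ring structure on `L⁰ = L⁰(F)`, the space of a.e. equivalence classes of real-valued
random variables, with pointwise (a.e.) multiplication. -/
noncomputable instance : CommRing (Ω →ₘ[P] ℝ) :=
  { (inferInstance : AddCommGroup (Ω →ₘ[P] ℝ)),
    (inferInstance : CommMonoid (Ω →ₘ[P] ℝ)) with
    left_distrib := fun f g h => by
      refine AEEqFun.induction_on₃ f g h fun f hf g hg h hh => ?_
      rw [AEEqFun.mk_add_mk, AEEqFun.mk_mul_mk, AEEqFun.mk_mul_mk, AEEqFun.mk_mul_mk,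
        AEEqFun.mk_add_mk, AEEqFun.mk_eq_mk]
      filter_upwards with ω
      simp [mul_add]
    right_distrib := fun f g h => by
      refine AEEqFun.induction_on₃ f g h fun f hf g hg h hh => ?_
      rw [AEEqFun.mk_add_mk, AEEqFun.mk_mul_mk, AEEqFun.mk_mul_mk, AEEqFun.mk_mul_mk,
        AEEqFun.mk_add_mk, AEEqFun.mk_eq_mk]
      filter_upwards with ω
      simp [add_mul]
    zero_mul := fun f => by
      refine AEEqFun.induction_on f fun f hf => ?_
      have h0 : (0 : Ω →ₘ[P] ℝ) = AEEqFun.mk (fun _ => (0 : ℝ)) aestronglyMeasurable_const := rfl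
      rw [h0, AEEqFun.mk_mul_mk, AEEqFun.mk_eq_mk]
      filter_upwards with ω
      simp
    mul_zero := fun f => by
      refine AEEqFun.induction_on f fun f hf => ?_
      have h0 : (0 : Ω →ₘ[P] ℝ) = AEEqFun.mk (fun _ => (0 : ℝ)) aestronglyMeasurable_const := rfl
      rw [h0, AEEqFun.mk_mul_mk, AEEqFun.mk_eq_mk]
      filter_upwards with ω
      simp }

open Classical in
/-- The indicator `1_A` of a (measurable) set, as an element of `L⁰`. -/
noncomputable def ind (A : Set Ω) : Ω →ₘ[P] ℝ :=
  if hA : MeasurableSet A then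
    AEEqFun.mk (A.indicator fun _ => (1 : ℝ))
      ((measurable_const.indicator hA).aestronglyMeasurable)
  else 0

/-- A partition of `Ω`: a sequence of pairwise disjoint measurable sets whose union is `Ω`. -/
def IsPartition (A : ℕ → Set Ω) : Prop :=
  (∀ k, MeasurableSet (A k)) ∧ Pairwise (Function.onFun Disjoint A) ∧ (⋃ k, A k) = Set.univ

/-- `ε ∈ L⁰_{++}`: `ε > 0` almost surely. -/
def L0pos (ε : Ω →ₘ[P] ℝ) : Prop := ∀ᵐ ω ∂P, 0 < ε ω

variable {E : Type*} [AddCommGroup E] [Module (Ω →ₘ[P] ℝ) E]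

/-- The `L⁰`-module `E` is stable: every sequence `{x_k}` in `E` has a unique concatenation
along every partition `{A_k}`. -/
def IsStableModule (E : Type*) [AddCommGroup E] [Module (Ω →ₘ[P] ℝ) E] : Prop :=
  ∀ A : ℕ → Set Ω, IsPartition A → ∀ x : ℕ → E,
    ∃! z : E, ∀ k, ind P (A k) • z = ind P (A k) • x k

/-- The concatenation `Σ_k 1_{A_k} U_k` of a sequence of subsets of `E` along a partition. -/
def concatSet (A : ℕ → Set Ω) (U : ℕ → Set E) : Set E :=
  {x : E | ∀ k, ∃ u ∈ U k, ind P (A k) • x = ind P (A k) • u}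

/-- An `L⁰`-seminorm on the `L⁰`-module `E`: nonnegative-valued, absolutely homogeneous over
`L⁰` and subadditive. -/
def IsL0Seminorm (n : E → Ω →ₘ[P] ℝ) : Prop :=
  (∀ x : E, ∀ᵐ ω ∂P, 0 ≤ n x ω) ∧
  (∀ (η : Ω →ₘ[P] ℝ) (x : E), ∀ᵐ ω ∂P, n (η • x) ω = |η ω| * n x ω) ∧
  (∀ x y : E, ∀ᵐ ω ∂P, n (x + y) ω ≤ n x ω + n y ω)

/-- `L⁰`-convexity of a subset of `E`. -/
def L0Convex (U : Set E) : Prop :=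
  ∀ x ∈ U, ∀ y ∈ U, ∀ η : Ω →ₘ[P] ℝ, (∀ᵐ ω ∂P, 0 ≤ η ω ∧ η ω ≤ 1) →
    η • x + (1 - η) • y ∈ U

/-- `L⁰`-absorbency of a subset of `E`. -/
def L0Absorbent (U : Set E) : Prop :=
  ∀ x : E, ∃ η : Ω →ₘ[P] ℝ, L0pos P η ∧ ∃ u ∈ U, x = η • u

/-- `L⁰`-balancedness of a subset of `E`. -/
def L0Balanced (U : Set E) : Prop :=
  ∀ x ∈ U, ∀ η : Ω →ₘ[P] ℝ, (∀ᵐ ω ∂P, |η ω| ≤ 1) → η • x ∈ U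

/-- Stability of a subset of `E`: it contains every concatenation of its elements along
every partition. -/
def IsStableSet (U : Set E) : Prop :=
  ∀ A : ℕ → Set Ω, IsPartition A → ∀ x : ℕ → E, (∀ k, x k ∈ U) →
    ∀ z : E, (∀ k, ind P (A k) • z = ind P (A k) • x k) → z ∈ U

/-- The ball `{ξ : |ξ − η| ≤ ε a.s.}` in `L⁰`. -/
def L0ball (η ε : Ω →ₘ[P] ℝ) : Set (Ω →ₘ[P] ℝ) :=
  {ξ : Ω →ₘ[P] ℝ | ∀ᵐ ω ∂P, |ξ ω - η ω| ≤ ε ω}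

/-- The topology on `L⁰` with neighborhood base `{η + B_ε : ε ∈ L⁰_{++}}` at each `η`,
where `B_ε = {ξ : |ξ| ≤ ε a.s.}`. -/
noncomputable def L0Topology : TopologicalSpace (Ω →ₘ[P] ℝ) where
  IsOpen O := ∀ η ∈ O, ∃ ε : Ω →ₘ[P] ℝ, L0pos P ε ∧ L0ball P η ε ⊆ O
  isOpen_univ := fun η _ => by
    refine ⟨1, ?_, Set.subset_univ _⟩
    filter_upwards [AEEqFun.coeFn_one (β := ℝ) (μ := P)] with ω h
    rw [h]
    exact one_pos
  isOpen_inter := fun s t hs ht η hη => by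
    obtain ⟨ε₁, hε₁, hb₁⟩ := hs η hη.1
    obtain ⟨ε₂, hε₂, hb₂⟩ := ht η hη.2
    refine ⟨ε₁ ⊓ ε₂, ?_, ?_⟩
    · filter_upwards [hε₁, hε₂, AEEqFun.coeFn_inf ε₁ ε₂] with ω h1 h2 h3
      rw [h3]
      exact lt_inf_iff.2 ⟨h1, h2⟩
    · intro ξ hξ
      constructor
      · refine hb₁ ?_
        filter_upwards [hξ, AEEqFun.coeFn_inf ε₁ ε₂] with ω h1 h2
        rw [h2] at h1
        exact h1.trans inf_le_left
      · refine hb₂ ?_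
        filter_upwards [hξ, AEEqFun.coeFn_inf ε₁ ε₂] with ω h1 h2
        rw [h2] at h1
        exact h1.trans inf_le_right
  isOpen_sUnion := fun 𝒮 h η hη => by
    obtain ⟨s, hs, hηs⟩ := hη
    obtain ⟨ε, hε, hb⟩ := h s hs η hηs
    exact ⟨ε, hε, hb.trans (Set.subset_sUnion_of_mem hs)⟩

/-- The stable ball `U_{{F_k},{A_k},ε} = {x : Σ_k 1_{A_k}·max_{‖·‖ ∈ F_k} ‖x‖ ≤ ε}` attached
to a partition `{A_k}`, a sequence of finite sets of seminorms `{F_k}` and `ε ∈ L⁰_{++}`. -/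
def stableBall (A : ℕ → Set Ω) (Fam : ℕ → Set (E → Ω →ₘ[P] ℝ)) (ε : Ω →ₘ[P] ℝ) : Set E :=
  {x : E | ∀ᵐ ω ∂P, ∀ k, ω ∈ A k → ∀ n ∈ Fam k, n x ω ≤ ε ω}

/-- The topology `T` on `E` is stably induced by the family `𝒮` of `L⁰`-seminorms: the sets
`U_{{F_k},{A_k},ε}` (over partitions `{A_k}`, sequences `{F_k}` of nonempty finite subsets of
`𝒮` and `ε ∈ L⁰_{++}`) form a neighborhood base of `0 ∈ E` for `T`. -/
def StablyInduced (𝒮 : Set (E → Ω →ₘ[P] ℝ)) (T : TopologicalSpace E) : Prop :=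
  (∀ (A : ℕ → Set Ω) (Fam : ℕ → Set (E → Ω →ₘ[P] ℝ)) (ε : Ω →ₘ[P] ℝ),
    IsPartition A → (∀ k, (Fam k).Finite ∧ (Fam k).Nonempty ∧ Fam k ⊆ 𝒮) → L0pos P ε →
    stableBall P A Fam ε ∈ @nhds E T 0) ∧
  (∀ V : Set E, V ∈ @nhds E T 0 →
    ∃ (A : ℕ → Set Ω) (Fam : ℕ → Set (E → Ω →ₘ[P] ℝ)) (ε : Ω →ₘ[P] ℝ),
      IsPartition A ∧ (∀ k, (Fam k).Finite ∧ (Fam k).Nonempty ∧ Fam k ⊆ 𝒮) ∧ L0pos P ε ∧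
      stableBall P A Fam ε ⊆ V)

end L0Module

end

open L0Module


namespace L0Proof

variable {Ω : Type*} [MeasurableSpace Ω] {P : Measure Ω}

theorem coe_ind {A : Set Ω} (hA : MeasurableSet A) :
    ∀ᵐ ω ∂P, ind P A ω = A.indicator (fun _ => (1 : ℝ)) ω := by
  rw [ind, dif_pos hA]
  exact AEEqFun.coeFn_mk _ _

theorem coe_mul (f g : Ω →ₘ[P] ℝ) : ∀ᵐ ω ∂P, (f * g) ω = f ω * g ω := AEEqFun.coeFn_mul f g

theorem coe_add (f g : Ω →ₘ[P] ℝ) : ∀ᵐ ω ∂P, (f + g) ω = f ω + g ω := AEEqFun.coeFn_add f g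

theorem coe_sub (f g : Ω →ₘ[P] ℝ) : ∀ᵐ ω ∂P, (f - g) ω = f ω - g ω := AEEqFun.coeFn_sub f g

theorem coe_one : ∀ᵐ ω ∂P, (1 : Ω →ₘ[P] ℝ) ω = 1 := AEEqFun.coeFn_one

theorem coe_zero : ∀ᵐ ω ∂P, (0 : Ω →ₘ[P] ℝ) ω = 0 := AEEqFun.coeFn_zero

/-- pointwise inverse -/
noncomputable def pinv (f : Ω →ₘ[P] ℝ) : Ω →ₘ[P] ℝ :=
  AEEqFun.compMeasurable (fun x : ℝ => x⁻¹) measurable_inv f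

theorem coe_pinv (f : Ω →ₘ[P] ℝ) : ∀ᵐ ω ∂P, pinv f ω = (f ω)⁻¹ :=
  AEEqFun.coeFn_compMeasurable _ _ f

/-- pointwise absolute value -/
noncomputable def pabs (f : Ω →ₘ[P] ℝ) : Ω →ₘ[P] ℝ :=
  AEEqFun.compMeasurable (fun x : ℝ => |x|) measurable_norm f

theorem coe_pabs (f : Ω →ₘ[P] ℝ) : ∀ᵐ ω ∂P, pabs f ω = |f ω| :=
  AEEqFun.coeFn_compMeasurable _ _ f

theorem pinv_mul {f : Ω →ₘ[P] ℝ} (hf : L0pos P f) : f * pinv f = 1 := by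
  apply AEEqFun.ext
  filter_upwards [hf, coe_mul f (pinv f), coe_pinv f, coe_one (P := P)] with ω h1 h2 h3 h4
  rw [h2, h3, h4, mul_inv_cancel₀ h1.ne']

theorem glue {A : ℕ → Set Ω} (hA : IsPartition A) (f : ℕ → Ω →ₘ[P] ℝ) :
    ∃ g : Ω →ₘ[P] ℝ, ∀ᵐ ω ∂P, ∀ k, ω ∈ A k → g ω = f k ω := by
  obtain ⟨g, hg, hgA⟩ := exists_measurable_piecewise A hA.1 (fun k => (f k : Ω → ℝ))
    (fun k => (f k).measurable) (fun i j hij => by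
      intro ω hω
      exact absurd hω.2 (Set.disjoint_left.1 (hA.2.1 hij) hω.1))
  refine ⟨AEEqFun.mk g hg.aestronglyMeasurable, ?_⟩
  filter_upwards [AEEqFun.coeFn_mk g hg.aestronglyMeasurable] with ω h k hk
  rw [h, hgA k hk]

theorem integrable_arctan [IsFiniteMeasure P] {f : Ω → ℝ} (hf : Measurable f) :
    Integrable (fun ω => Real.arctan (f ω)) P := by
  refine Integrable.of_bound (Real.measurable_arctan.comp hf).aestronglyMeasurable (Real.pi / 2) ?_
  filter_upwards with ω
  rw [Real.norm_eq_abs, abs_le]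
  exact ⟨(Real.neg_pi_div_two_lt_arctan _).le, (Real.arctan_lt_pi_div_two _).le⟩

theorem exists_essInf [IsFiniteMeasure P] (S : Set (Ω →ₘ[P] ℝ)) (hne : S.Nonempty)
    (hpos : ∀ f ∈ S, ∀ᵐ ω ∂P, 0 ≤ f ω)
    (hinf : ∀ f ∈ S, ∀ g ∈ S, ∃ h ∈ S, ∀ᵐ ω ∂P, h ω = min (f ω) (g ω)) :
    ∃ p : Ω →ₘ[P] ℝ, (∃ s : ℕ → Ω →ₘ[P] ℝ, (∀ n, s n ∈ S) ∧
      ∀ᵐ ω ∂P, p ω = ⨅ n, s n ω) ∧ ∀ f ∈ S, ∀ᵐ ω ∂P, p ω ≤ f ω := by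
  set φ : (Ω →ₘ[P] ℝ) → ℝ := fun f => ∫ ω, Real.arctan (f ω) ∂P with hφ
  have hint : ∀ f : Ω →ₘ[P] ℝ, Integrable (fun ω => Real.arctan (f ω)) P :=
    fun f => integrable_arctan f.measurable
  have hbdd : BddBelow (φ '' S) := by
    refine ⟨0, ?_⟩
    rintro _ ⟨f, hf, rfl⟩
    apply integral_nonneg_of_ae
    filter_upwards [hpos f hf] with ω h
    exact Real.arctan_nonneg.2 h
  have hex : ∀ n : ℕ, ∃ f ∈ S, φ f < sInf (φ '' S) + 1 / ((n : ℝ) + 1) := by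
    intro n
    have : sInf (φ '' S) < sInf (φ '' S) + 1 / ((n : ℝ) + 1) := by
      have : 0 < 1 / ((n : ℝ) + 1) := by positivity
      linarith
    obtain ⟨_, ⟨f, hf, rfl⟩, h⟩ := exists_lt_of_csInf_lt (hne.image φ) this
    exact ⟨f, hf, h⟩
  choose s hs hsφ using hex
  have hm : Measurable (fun ω => ⨅ n, s n ω) := Measurable.iInf fun n => (s n).measurable
  refine ⟨AEEqFun.mk _ hm.aestronglyMeasurable,
    ⟨s, hs, AEEqFun.coeFn_mk _ _⟩, ?_⟩
  intro f hf
  set p : Ω →ₘ[P] ℝ := AEEqFun.mk _ hm.aestronglyMeasurable with hp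
  have hpc : ∀ᵐ ω ∂P, p ω = ⨅ n, s n ω := AEEqFun.coeFn_mk _ _
  have hspos : ∀ᵐ ω ∂P, ∀ n, 0 ≤ s n ω := ae_all_iff.2 fun n => hpos _ (hs n)
  have hps : ∀ᵐ ω ∂P, ∀ n, p ω ≤ s n ω := by
    filter_upwards [hpc, hspos] with ω h1 h2 n
    rw [h1]
    exact ciInf_le ⟨0, by rintro _ ⟨k, rfl⟩; exact h2 k⟩ n
  have hintm : ∀ g : Ω →ₘ[P] ℝ, Integrable (fun ω => Real.arctan (min (g ω) (f ω))) P :=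
    fun g => integrable_arctan (g.measurable.min f.measurable)
  have hle : ∀ n : ℕ, ∫ ω, (Real.arctan (p ω) - Real.arctan (min (p ω) (f ω))) ∂P
      ≤ 1 / ((n : ℝ) + 1) := by
    intro n
    obtain ⟨h, hS, hh⟩ := hinf _ (hs n) f hf
    have h1 : sInf (φ '' S) ≤ φ h := csInf_le hbdd ⟨h, hS, rfl⟩
    have h2 : φ h = ∫ ω, Real.arctan (min (s n ω) (f ω)) ∂P := by
      apply integral_congr_ae
      filter_upwards [hh] with ω h
      simp only [h]
    calc _ ≤ ∫ ω, (Real.arctan (s n ω) - Real.arctan (min (s n ω) (f ω))) ∂P := by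
            apply integral_mono_ae ((hint p).sub (hintm p)) ((hint _).sub (hintm _))
            filter_upwards [hps] with ω h
            have h := h n
            have h' := Real.arctan_strictMono.monotone h
            simp only [Pi.sub_apply]
            rcases le_total (p ω) (f ω) with h3 | h3
            · rw [min_eq_left h3, sub_self, sub_nonneg]
              exact Real.arctan_strictMono.monotone (min_le_left _ _)
            · rw [min_eq_right h3, min_eq_right (h3.trans h)]
              linarith
      _ = φ (s n) - φ h := by rw [integral_sub (hint _) (hintm _), h2]
      _ ≤ _ := by have := hsφ n; linarith
  have h0 : ∀ᵐ ω ∂P, 0 ≤ Real.arctan (p ω) - Real.arctan (min (p ω) (f ω)) := by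
    filter_upwards with ω
    rw [sub_nonneg]
    exact Real.arctan_strictMono.monotone (min_le_left _ _)
  have hz : ∫ ω, (Real.arctan (p ω) - Real.arctan (min (p ω) (f ω))) ∂P = 0 := by
    refine le_antisymm ?_ (integral_nonneg_of_ae h0)
    exact ge_of_tendsto' tendsto_one_div_add_atTop_nhds_zero_nat hle
  rw [integral_eq_zero_iff_of_nonneg_ae h0 ((hint p).sub (hintm p))] at hz
  filter_upwards [hz] with ω h
  have h : Real.arctan (p ω) - Real.arctan (min (p ω) (f ω)) = 0 := h
  have := Real.arctan_strictMono.injective (sub_eq_zero.1 h)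
  rw [this]
  exact min_le_right _ _

variable {E : Type*} [AddCommGroup E] [Module (Ω →ₘ[P] ℝ) E]

theorem seminorm_local {n : E → Ω →ₘ[P] ℝ} (hn : IsL0Seminorm P n) {A : Set Ω}
    (hA : MeasurableSet A) {x y : E} (h : ind P A • x = ind P A • y) :
    ∀ᵐ ω ∂P, ω ∈ A → n x ω = n y ω := by
  filter_upwards [hn.2.1 (ind P A) x, hn.2.1 (ind P A) y, coe_ind (P := P) hA] with ω h1 h2 h3 hω
  rw [h, h2, h3] at h1
  simpa [hω] using h1.symm

theorem mem_stableBall {A : ℕ → Set Ω} {Fam : ℕ → Set (E → Ω →ₘ[P] ℝ)} {ε : Ω →ₘ[P] ℝ}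
    (hF : ∀ k, (Fam k).Finite) {x : E} :
    x ∈ stableBall P A Fam ε ↔ ∀ k, ∀ n ∈ Fam k, ∀ᵐ ω ∂P, ω ∈ A k → n x ω ≤ ε ω := by
  unfold stableBall
  rw [Set.mem_setOf_eq, ae_all_iff]
  refine forall_congr' fun k => ?_
  rw [← ae_ball_iff (hF k).countable]
  refine eventually_congr (Eventually.of_forall fun ω => ?_)
  exact ⟨fun h n hn hω => h hω n hn, fun h hω n hn => h n hn hω⟩

/-- The set of nonnegative `ξ` with `x ∈ ξ U`. -/
def gset (U : Set E) (x : E) : Set (Ω →ₘ[P] ℝ) :=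
  {ξ | (∀ᵐ ω ∂P, 0 ≤ ξ ω) ∧ ∃ u ∈ U, x = ξ • u}

theorem gset_inf {U : Set E} (hc : L0Convex P U) (x : E) :
    ∀ f ∈ gset (P := P) U x, ∀ g ∈ gset (P := P) U x,
      ∃ h ∈ gset (P := P) U x, ∀ᵐ ω ∂P, h ω = min (f ω) (g ω) := by
  rintro f ⟨hf, u, hu, hxu⟩ g ⟨hg, v, hv, hxv⟩
  have hm : MeasurableSet {ω | f ω ≤ g ω} := measurableSet_le f.measurable g.measurable
  set η := ind P {ω | f ω ≤ g ω} with hη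
  have hηc := coe_ind (P := P) hm
  have hi := AEEqFun.coeFn_inf f g
  have e1 : (f ⊓ g) * η = η * f := by
    apply AEEqFun.ext
    filter_upwards [hηc, hi, coe_mul (f ⊓ g) η, coe_mul η f] with ω h1 h2 h3 h4
    rw [h3, h4, h2, hη, h1]
    by_cases h : f ω ≤ g ω <;> simp [h]
  have e2 : (f ⊓ g) * (1 - η) = (1 - η) * g := by
    apply AEEqFun.ext
    filter_upwards [hηc, hi, coe_mul (f ⊓ g) (1 - η), coe_mul (1 - η) g, coe_sub 1 η,
      coe_one (P := P)] with ω h1 h2 h3 h4 h5 h6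
    rw [h3, h4, h2, h5, h6, hη, h1]
    by_cases h : f ω ≤ g ω
    · simp [h]
    · simp [h, (not_le.1 h).le]
  refine ⟨f ⊓ g, ⟨?_, η • u + (1 - η) • v, hc u hu v hv η ?_, ?_⟩, hi⟩
  · filter_upwards [hf, hg, hi] with ω h1 h2 h3
    rw [h3]
    exact le_inf h1 h2
  · filter_upwards [hηc] with ω h1
    rw [hη, h1]
    by_cases h : f ω ≤ g ω <;> simp [h]
  · rw [smul_add, smul_smul, smul_smul, e1, e2, mul_smul, mul_smul, ← hxu, ← hxv, ← add_smul]
    simp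

theorem gset_add {U : Set E} (hc : L0Convex P U) {x y : E} {f g : Ω →ₘ[P] ℝ}
    (hf : f ∈ gset (P := P) U x) (hg : g ∈ gset (P := P) U y) :
    f + g ∈ gset (P := P) U (x + y) := by
  obtain ⟨hf, u, hu, rfl⟩ := hf
  obtain ⟨hg, v, hv, rfl⟩ := hg
  have hadd := coe_add f g
  set η := f * pinv (f + g) with hη
  have hηc : ∀ᵐ ω ∂P, η ω = f ω / (f ω + g ω) := by
    filter_upwards [coe_mul f (pinv (f + g)), coe_pinv (f + g), hadd] with ω h1 h2 h3
    rw [hη, h1, h2, h3, div_eq_mul_inv]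
  have e1 : (f + g) * η = f := by
    apply AEEqFun.ext
    filter_upwards [hf, hg, coe_mul (f + g) η, hadd, hηc] with ω h1 h2 h3 h4 h5
    rw [h3, h4, h5]
    rcases eq_or_ne (f ω + g ω) 0 with h | h
    · have : f ω = 0 := by linarith
      rw [this]; simp
    · field_simp
  have e2 : (f + g) * (1 - η) = g := by
    rw [mul_sub, e1]; ring
  refine ⟨?_, η • u + (1 - η) • v, hc u hu v hv η ?_, ?_⟩
  · filter_upwards [hf, hg, hadd] with ω h1 h2 h3
    rw [h3]; linarith
  · filter_upwards [hf, hg, hηc] with ω h1 h2 h3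
    rw [h3]
    exact ⟨by positivity, div_le_one_of_le₀ (by linarith) (by linarith)⟩
  · rw [smul_add, smul_smul, smul_smul, e1, e2]

theorem gset_smul {U : Set E} (hb : L0Balanced P U) {x : E} {f : Ω →ₘ[P] ℝ}
    (hf : f ∈ gset (P := P) U x) (η : Ω →ₘ[P] ℝ) :
    pabs η * f ∈ gset (P := P) U (η • x) := by
  obtain ⟨hf, u, hu, rfl⟩ := hf
  set σ := η * pinv (pabs η) with hσ
  have hσc : ∀ᵐ ω ∂P, σ ω = η ω / |η ω| := by
    filter_upwards [coe_mul η (pinv (pabs η)), coe_pinv (pabs η), coe_pabs η] with ω h1 h2 h3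
    rw [hσ, h1, h2, h3, div_eq_mul_inv]
  have e1 : pabs η * f * σ = η * f := by
    apply AEEqFun.ext
    filter_upwards [coe_mul (pabs η * f) σ, coe_mul (pabs η) f, coe_mul η f, hσc,
      coe_pabs η] with ω h1 h2 h3 h4 h5
    rw [h1, h2, h3, h4, h5]
    rcases eq_or_ne (η ω) 0 with h | h
    · simp [h]
    · have := abs_pos.2 h
      field_simp
  refine ⟨?_, σ • u, hb u hu σ ?_, ?_⟩
  · filter_upwards [hf, coe_mul (pabs η) f, coe_pabs η] with ω h1 h2 h3
    rw [h2, h3]; positivity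
  · filter_upwards [hσc] with ω h
    rw [h, abs_div, abs_abs]
    exact div_self_le_one _
  · rw [smul_smul, smul_smul, e1]

/-- The gauge function of `U`. -/
noncomputable def gauge [IsFiniteMeasure P] (U : Set E) (hc : L0Convex P U) (ha : L0Absorbent P U)
    (x : E) : Ω →ₘ[P] ℝ :=
  Classical.choose (exists_essInf (gset (P := P) U x)
    (by obtain ⟨η, h1, h2⟩ := ha x; exact ⟨η, h1.mono fun _ h => h.le, h2⟩)
    (fun _ h => h.1) (gset_inf hc x))

theorem gauge_spec [IsFiniteMeasure P] (U : Set E) (hc : L0Convex P U) (ha : L0Absorbent P U)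
    (x : E) : (∃ s : ℕ → Ω →ₘ[P] ℝ, (∀ n, s n ∈ gset (P := P) U x) ∧
      ∀ᵐ ω ∂P, gauge U hc ha x ω = ⨅ n, s n ω) ∧
      ∀ f ∈ gset (P := P) U x, ∀ᵐ ω ∂P, gauge U hc ha x ω ≤ f ω :=
  Classical.choose_spec (exists_essInf (gset (P := P) U x)
    (by obtain ⟨η, h1, h2⟩ := ha x; exact ⟨η, h1.mono fun _ h => h.le, h2⟩)
    (fun _ h => h.1) (gset_inf hc x))

theorem gauge_seminorm [IsFiniteMeasure P] (U : Set E) (hc : L0Convex P U) (ha : L0Absorbent P U)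
    (hb : L0Balanced P U) : IsL0Seminorm P (gauge U hc ha) := by
  have hnn : ∀ x : E, ∀ᵐ ω ∂P, 0 ≤ gauge U hc ha x ω := by
    intro x
    obtain ⟨⟨s, hs, hsi⟩, -⟩ := gauge_spec U hc ha x
    filter_upwards [hsi, ae_all_iff.2 fun n => (hs n).1] with ω h1 h2
    rw [h1]
    exact le_ciInf h2
  have hadd : ∀ x y : E, ∀ᵐ ω ∂P,
      gauge U hc ha (x + y) ω ≤ gauge U hc ha x ω + gauge U hc ha y ω := by
    intro x y
    obtain ⟨⟨s, hs, hsi⟩, -⟩ := gauge_spec U hc ha x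
    obtain ⟨⟨t, ht, hti⟩, -⟩ := gauge_spec U hc ha y
    have h := (gauge_spec U hc ha (x + y)).2
    filter_upwards [hsi, hti, ae_all_iff.2 fun n => ae_all_iff.2 fun m =>
      h _ (gset_add hc (hs n) (ht m)), ae_all_iff.2 fun n => ae_all_iff.2 fun m =>
      coe_add (s n) (t m)] with ω h1 h2 h3 h4
    rw [h1, h2]
    rw [← sub_le_iff_le_add]
    refine le_ciInf fun n => ?_
    rw [sub_le_comm]
    refine le_ciInf fun m => ?_
    have := h3 n m
    rw [h4] at this
    linarith
  have hsm : ∀ (η : Ω →ₘ[P] ℝ) (x : E), ∀ᵐ ω ∂P,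
      gauge U hc ha (η • x) ω ≤ |η ω| * gauge U hc ha x ω := by
    intro η x
    obtain ⟨⟨s, hs, hsi⟩, -⟩ := gauge_spec U hc ha x
    have h := (gauge_spec U hc ha (η • x)).2
    filter_upwards [hsi, ae_all_iff.2 fun n => h _ (gset_smul hb (hs n) η), ae_all_iff.2 fun n =>
      coe_mul (pabs η) (s n), coe_pabs η] with ω h1 h2 h3 h4
    rw [h1, Real.mul_iInf_of_nonneg (abs_nonneg _)]
    refine le_ciInf fun n => ?_
    rw [← h4, ← h3]
    exact h2 n
  refine ⟨hnn, fun η x => ?_, hadd⟩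
  have hx : x = pinv η • (η • x) + (1 - pinv η * η) • x := by
    rw [smul_smul, ← add_smul]; simp
  have key := hadd (pinv η • (η • x)) ((1 - pinv η * η) • x)
  rw [← hx] at key
  filter_upwards [hsm η x, key, hsm (pinv η) (η • x), hsm (1 - pinv η * η) x, coe_pinv η,
    coe_sub 1 (pinv η * η), coe_mul (pinv η) η, coe_one (P := P), hnn (η • x)]
    with ω h1 h2 h3 h4 h5 h6 h7 h8 h9
  refine le_antisymm h1 ?_
  rcases eq_or_ne (η ω) 0 with h | h
  · rw [h]; simpa using h9
  · rw [h6, h7, h5, h8, inv_mul_cancel₀ h] at h4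
    rw [h5] at h3
    have h10 : gauge U hc ha x ω ≤ |(η ω)⁻¹| * gauge U hc ha (η • x) ω := by
      simp at h4 h3 ⊢
      linarith
    have hp := abs_pos.2 h
    rw [abs_inv] at h10
    calc _ ≤ |η ω| * (|η ω|⁻¹ * gauge U hc ha (η • x) ω) := by gcongr
      _ = _ := by field_simp

theorem gauge_le_one [IsFiniteMeasure P] {U : Set E} (hc : L0Convex P U) (ha : L0Absorbent P U)
    {x : E} (hx : x ∈ U) : ∀ᵐ ω ∂P, gauge U hc ha x ω ≤ 1 := by
  filter_upwards [(gauge_spec U hc ha x).2 1 ⟨by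
    filter_upwards [coe_one (P := P)] with ω h; rw [h]; exact zero_le_one, x, hx, by simp⟩,
    coe_one (P := P)] with ω h1 h2
  rwa [h2] at h1

theorem mem_of_gauge_lt_one [IsFiniteMeasure P] {U : Set E} (hc : L0Convex P U)
    (ha : L0Absorbent P U) (hb : L0Balanced P U) (hs : IsStableSet P U)
    {x : E} (hx : ∀ᵐ ω ∂P, gauge U hc ha x ω < 1) : x ∈ U := by
  obtain ⟨⟨s, hsm, hsi⟩, -⟩ := gauge_spec U hc ha x
  have hlt : ∀ᵐ ω ∂P, ∃ n, s n ω < 1 := by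
    filter_upwards [hx, hsi] with ω h1 h2
    rw [h2] at h1
    exact exists_lt_of_ciInf_lt h1
  -- sets covering `Ω`, the first being the null set
  let B : ℕ → Set Ω := fun n => Nat.casesOn n {ω | ∀ n, 1 ≤ s n ω} (fun n => {ω | s n ω < 1})
  have hB : ∀ n, MeasurableSet (B n) := by
    intro n
    cases n with
    | zero =>
      have : B 0 = ⋂ n, {ω | 1 ≤ s n ω} := by ext; simp [B]
      rw [this]
      exact MeasurableSet.iInter fun n => measurableSet_le measurable_const (s n).measurable
    | succ n => exact measurableSet_lt (s n).measurable measurable_const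
  have hpart : IsPartition (disjointed B) := by
    refine ⟨fun n => MeasurableSet.disjointed hB n, disjoint_disjointed B, ?_⟩
    rw [iUnion_disjointed, Set.eq_univ_iff_forall]
    intro ω
    rw [Set.mem_iUnion]
    by_cases h : ∃ n, s n ω < 1
    · obtain ⟨n, h⟩ := h
      exact ⟨n + 1, h⟩
    · push Not at h
      exact ⟨0, h⟩
  have h0 : (0 : E) ∈ U := by
    obtain ⟨_, u, hu, _⟩ := (hsm 0)
    have := hb u hu 0 (by filter_upwards [coe_zero (P := P)] with ω h; rw [h]; simp)
    simpa using this
  choose u hu hxu using fun n => (hsm n).2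
  let y : ℕ → E := fun n => Nat.casesOn n 0 (fun n => (ind P (disjointed B (n + 1)) * s n) • u n)
  refine hs (disjointed B) hpart y ?_ x ?_
  · intro k
    cases k with
    | zero => exact h0
    | succ n =>
      refine hb _ (hu n) _ ?_
      filter_upwards [coe_mul (ind P (disjointed B (n + 1))) (s n),
        coe_ind (P := P) (hpart.1 (n + 1)), (hsm n).1] with ω h1 h2 h3
      rw [h1, h2]
      by_cases h : ω ∈ disjointed B (n + 1)
      · have : s n ω < 1 := disjointed_subset B (n + 1) h
        simp [h, abs_of_nonneg h3, this.le]
      · simp [h]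
  · intro k
    cases k with
    | zero =>
      have : ind P (disjointed B 0) = 0 := by
        apply AEEqFun.ext
        filter_upwards [coe_ind (P := P) (hpart.1 0), hlt, coe_zero (P := P)] with ω h1 h2 h3
        rw [h1, h3]
        apply Set.indicator_of_notMem
        intro h
        obtain ⟨n, h2⟩ := h2
        have h : ∀ n, 1 ≤ s n ω := disjointed_subset B 0 h
        exact absurd (h n) (not_le.2 h2)
      rw [this, zero_smul, zero_smul]
    | succ n =>
      change _ = ind P (disjointed B (n + 1)) • ((ind P (disjointed B (n + 1)) * s n) • u n)
      have hii : ind P (disjointed B (n + 1)) * ind P (disjointed B (n + 1))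
          = ind P (disjointed B (n + 1)) := by
        apply AEEqFun.ext
        filter_upwards [coe_mul (ind P (disjointed B (n + 1))) (ind P (disjointed B (n + 1))),
          coe_ind (P := P) (hpart.1 (n + 1))] with ω h1 h2
        rw [h1, h2]
        by_cases h : ω ∈ disjointed B (n + 1) <;> simp [h]
      rw [mul_smul, ← hxu, smul_smul, hii]

theorem ball_convex {A : ℕ → Set Ω} {Fam : ℕ → Set (E → Ω →ₘ[P] ℝ)} {ε : Ω →ₘ[P] ℝ}
    (hF : ∀ k, (Fam k).Finite) (hn : ∀ k, ∀ n ∈ Fam k, IsL0Seminorm P n) :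
    L0Convex P (stableBall P A Fam ε) := by
  intro x hx y hy η hη
  rw [mem_stableBall hF] at hx hy ⊢
  intro k n hnk
  have hs := hn k n hnk
  filter_upwards [hx k n hnk, hy k n hnk, hη, hs.2.2 (η • x) ((1 - η) • y), hs.2.1 η x,
    hs.2.1 (1 - η) y, coe_sub 1 η, coe_one (P := P)] with ω h1 h2 h3 h4 h5 h6 h7 h8 hω
  have h1 := h1 hω
  have h2 := h2 hω
  rw [h5, h6, h7, h8, abs_of_nonneg h3.1, abs_of_nonneg (sub_nonneg.2 h3.2)] at h4
  nlinarith [mul_le_mul_of_nonneg_left h1 h3.1,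
    mul_le_mul_of_nonneg_left h2 (sub_nonneg.2 h3.2)]

theorem ball_balanced {A : ℕ → Set Ω} {Fam : ℕ → Set (E → Ω →ₘ[P] ℝ)} {ε : Ω →ₘ[P] ℝ}
    (hF : ∀ k, (Fam k).Finite) (hn : ∀ k, ∀ n ∈ Fam k, IsL0Seminorm P n) :
    L0Balanced P (stableBall P A Fam ε) := by
  intro x hx η hη
  rw [mem_stableBall hF] at hx ⊢
  intro k n hnk
  have hs := hn k n hnk
  filter_upwards [hx k n hnk, hη, hs.2.1 η x, hs.1 x] with ω h1 h2 h3 h4 hω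
  have h1 := h1 hω
  rw [h3]
  nlinarith [mul_le_mul_of_nonneg_right h2 h4]

theorem ball_stable {A : ℕ → Set Ω} {Fam : ℕ → Set (E → Ω →ₘ[P] ℝ)} {ε : Ω →ₘ[P] ℝ}
    (hF : ∀ k, (Fam k).Finite) (hn : ∀ k, ∀ n ∈ Fam k, IsL0Seminorm P n) :
    IsStableSet P (stableBall P A Fam ε) := by
  intro B hB x hx z hz
  rw [mem_stableBall hF]
  intro k n hnk
  have hs := hn k n hnk
  filter_upwards [ae_all_iff.2 fun j => (mem_stableBall hF).1 (hx j) k n hnk,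
    ae_all_iff.2 fun j => seminorm_local hs (hB.1 j) (hz j)] with ω h1 h2 hω
  obtain ⟨j, hj⟩ := Set.mem_iUnion.1 (hB.2.2.symm ▸ Set.mem_univ ω : ω ∈ ⋃ k, B k)
  rw [h2 j hj]
  exact h1 j hω

theorem absorbent_of_nhds (T : TopologicalSpace E)
    (hsmul : @ContinuousSMul (Ω →ₘ[P] ℝ) E _ (L0Topology P) T) {U : Set E}
    (hU : U ∈ @nhds E T 0) : L0Absorbent P U := by
  letI := T
  letI := L0Topology P
  intro x
  have hc : Continuous fun η : Ω →ₘ[P] ℝ => η • x := continuous_id.smul continuous_const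
  have h0 : (fun η : Ω →ₘ[P] ℝ => η • x) ⁻¹' U ∈ nhds (0 : Ω →ₘ[P] ℝ) := by
    apply hc.continuousAt
    simpa using hU
  obtain ⟨O, hO, hOo, h0O⟩ := mem_nhds_iff.1 h0
  obtain ⟨ε, hε, hb⟩ := hOo 0 h0O
  have hεm : ε • x ∈ U := by
    apply hO
    apply hb
    filter_upwards [hε, coe_zero (P := P)] with ω h1 h2
    rw [h2, sub_zero, abs_of_pos h1]
  refine ⟨pinv ε, ?_, ε • x, hεm, ?_⟩
  · filter_upwards [hε, coe_pinv ε] with ω h1 h2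
    rw [h2]; positivity
  · rw [smul_smul, mul_comm, pinv_mul hε, one_smul]

theorem concat_balls {A : ℕ → Set Ω} (hA : IsPartition A) {B : ℕ → ℕ → Set Ω}
    (hB : ∀ k, IsPartition (B k)) {Fam : ℕ → ℕ → Set (E → Ω →ₘ[P] ℝ)} {e : ℕ → Ω →ₘ[P] ℝ}
    (hF : ∀ k j, (Fam k j).Finite) (hn : ∀ k j, ∀ n ∈ Fam k j, IsL0Seminorm P n)
    (he : ∀ k, L0pos P (e k))
    {ε : Ω →ₘ[P] ℝ} (hε : ∀ᵐ ω ∂P, ∀ k, ω ∈ A k → ε ω = e k ω) :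
    concatSet P A (fun k => stableBall P (B k) (Fam k) (e k)) =
      stableBall P (fun m => A m.unpair.1 ∩ B m.unpair.1 m.unpair.2)
        (fun m => Fam m.unpair.1 m.unpair.2) ε := by
  ext x
  rw [mem_stableBall (fun m => hF _ _)]
  constructor
  · intro hx m n hnm
    obtain ⟨u, hu, hxu⟩ := hx m.unpair.1
    rw [mem_stableBall (hF _)] at hu
    filter_upwards [hu _ n hnm, hε, seminorm_local (hn _ _ n hnm) (hA.1 _) hxu]
      with ω h1 h2 h3 hω
    rw [h2 _ hω.1, h3 hω.1]
    exact h1 hω.2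
  · intro hx k
    have hii : ind P (A k) * ind P (A k) = ind P (A k) := by
      apply AEEqFun.ext
      filter_upwards [coe_mul (ind P (A k)) (ind P (A k)), coe_ind (P := P) (hA.1 k)] with ω h1 h2
      rw [h1, h2]
      by_cases h : ω ∈ A k <;> simp [h]
    refine ⟨ind P (A k) • x, ?_, by rw [smul_smul, hii]⟩
    rw [mem_stableBall (hF _)]
    intro j n hnj
    have h := hx (Nat.pair k j)
    simp only [Nat.unpair_pair] at h
    filter_upwards [h n hnj, (hn _ _ n hnj).2.1 (ind P (A k)) x, coe_ind (P := P) (hA.1 k), he k, hε]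
      with ω h1 h2 h3 h4 h5 hω
    rw [h2, h3]
    by_cases hk : ω ∈ A k
    · rw [← h5 k hk]
      simpa [hk] using h1 ⟨hk, hω⟩
    · simpa [hk] using h4.le

theorem partition_pair {A : ℕ → Set Ω} (hA : IsPartition A) {B : ℕ → ℕ → Set Ω}
    (hB : ∀ k, IsPartition (B k)) :
    IsPartition (fun m : ℕ => A m.unpair.1 ∩ B m.unpair.1 m.unpair.2) := by
  refine ⟨fun m => (hA.1 _).inter ((hB _).1 _), ?_, ?_⟩
  · intro m m' hne
    change Disjoint _ _
    rw [Set.disjoint_left]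
    rintro ω ⟨h1, h2⟩ ⟨h3, h4⟩
    have e1 : m.unpair.1 = m'.unpair.1 := by
      by_contra h
      exact Set.disjoint_left.1 (hA.2.1 h) h1 h3
    rw [← e1] at h4
    have e2 : m.unpair.2 = m'.unpair.2 := by
      by_contra h
      exact Set.disjoint_left.1 ((hB _).2.1 h) h2 h4
    exact hne (by rw [← Nat.pair_unpair m, ← Nat.pair_unpair m', e1, e2])
  · rw [Set.eq_univ_iff_forall]
    intro ω
    obtain ⟨k, hk⟩ := Set.mem_iUnion.1 (hA.2.2.symm ▸ Set.mem_univ ω : ω ∈ ⋃ k, A k)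
    obtain ⟨j, hj⟩ := Set.mem_iUnion.1 ((hB k).2.2.symm ▸ Set.mem_univ ω : ω ∈ ⋃ j, B k j)
    exact Set.mem_iUnion.2 ⟨Nat.pair k j, by simpa using ⟨hk, hj⟩⟩

end L0Proof

open L0Proof

/-- Let `E` be a stable `L⁰(F)`-module and `𝒯` a topology making `E[𝒯]` a
topological `L⁰`-module. Then `𝒯` is stably induced by some family of `L⁰`-seminorms iff
there is a neighborhood base `𝒰` of `0 ∈ E` for `𝒯` such that (1) every `U ∈ 𝒰` is
`L⁰`-convex, `L⁰`-absorbent, `L⁰`-balanced and stable, and (2) for every partition `{A_k}`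
and every sequence `{U_k} ⊆ 𝒰` one has `Σ_k 1_{A_k} U_k ∈ 𝒰`. -/
theorem stmt_0 {Ω : Type*} [MeasurableSpace Ω] (P : MeasureTheory.Measure Ω)
    [MeasureTheory.IsProbabilityMeasure P]
    (E : Type*) [AddCommGroup E] [Module (Ω →ₘ[P] ℝ) E]
    (hstable : IsStableModule P E)
    (T : TopologicalSpace E)
    (hadd : @ContinuousAdd E T _)
    (hsmul : @ContinuousSMul (Ω →ₘ[P] ℝ) E _ (L0Topology P) T) :
    (∃ 𝒮 : Set (E → Ω →ₘ[P] ℝ), (∀ n ∈ 𝒮, IsL0Seminorm P n) ∧ StablyInduced P 𝒮 T) ↔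
      ∃ 𝒰 : Set (Set E),
        (∀ U ∈ 𝒰, U ∈ @nhds E T 0) ∧
        (∀ V : Set E, V ∈ @nhds E T 0 → ∃ U ∈ 𝒰, U ⊆ V) ∧
        (∀ U ∈ 𝒰, L0Convex P U ∧ L0Absorbent P U ∧ L0Balanced P U ∧ IsStableSet P U) ∧
        (∀ A : ℕ → Set Ω, IsPartition A → ∀ Us : ℕ → Set E, (∀ k, Us k ∈ 𝒰) →
          concatSet P A Us ∈ 𝒰) := by
  constructor
  · rintro ⟨𝒮, hS, hnb, hbase⟩
    refine ⟨{U | ∃ (A : ℕ → Set Ω) (Fam : ℕ → Set (E → Ω →ₘ[P] ℝ)) (ε : Ω →ₘ[P] ℝ),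
      IsPartition A ∧ (∀ k, (Fam k).Finite ∧ (Fam k).Nonempty ∧ Fam k ⊆ 𝒮) ∧ L0pos P ε ∧
      U = stableBall P A Fam ε}, ?_, ?_, ?_, ?_⟩
    · rintro _ ⟨A, Fam, ε, hA, hF, hε, rfl⟩
      exact hnb A Fam ε hA hF hε
    · intro V hV
      obtain ⟨A, Fam, ε, hA, hF, hε, h⟩ := hbase V hV
      exact ⟨_, ⟨A, Fam, ε, hA, hF, hε, rfl⟩, h⟩
    · rintro _ ⟨A, Fam, ε, hA, hF, hε, rfl⟩
      have hf : ∀ k, (Fam k).Finite := fun k => (hF k).1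
      have hn : ∀ k, ∀ n ∈ Fam k, IsL0Seminorm P n := fun k n h => hS n ((hF k).2.2 h)
      exact ⟨ball_convex hf hn, absorbent_of_nhds T hsmul (hnb A Fam ε hA hF hε),
        ball_balanced hf hn, ball_stable hf hn⟩
    · intro A hA Us hUs
      choose B Fam e hB hF he hU using hUs
      obtain ⟨ε, hε⟩ := glue hA e
      refine ⟨_, _, ε, partition_pair hA hB, fun m => hF m.unpair.1 m.unpair.2, ?_, ?_⟩
      · filter_upwards [hε, ae_all_iff.2 he] with ω h1 h2
        obtain ⟨k, hk⟩ := Set.mem_iUnion.1 (hA.2.2.symm ▸ Set.mem_univ ω : ω ∈ ⋃ k, A k)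
        rw [h1 k hk]
        exact h2 k
      · rw [← concat_balls hA hB (fun k j => (hF k j).1)
          (fun k j n h => hS n ((hF k j).2.2 h)) he hε]
        congr 1
        exact funext hU
  · rintro ⟨𝒰, hnb, hbase, hprop, hcat⟩
    refine ⟨{n | ∃ (U : Set E) (hU : U ∈ 𝒰), n = L0Proof.gauge U (hprop U hU).1 (hprop U hU).2.1},
      ?_, ?_, ?_⟩
    · rintro _ ⟨U, hU, rfl⟩
      exact gauge_seminorm U _ _ (hprop U hU).2.2.1
    · intro A Fam ε hA hF hε
      have hfin : ∀ k, (Fam k).Finite := fun k => (hF k).1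
      have hV : ∀ k, ∃ V ∈ 𝒰, ∀ n ∈ Fam k, ∀ x ∈ V, ∀ᵐ ω ∂P, n x ω ≤ 1 := by
        intro k
        have hmem : {x : E | ∀ n ∈ Fam k, ∀ᵐ ω ∂P, n x ω ≤ 1} ∈ @nhds E T 0 := by
          have : {x : E | ∀ n ∈ Fam k, ∀ᵐ ω ∂P, n x ω ≤ 1} =
              ⋂ n ∈ Fam k, {x : E | ∀ᵐ ω ∂P, n x ω ≤ 1} := by ext; simp
          rw [this, Filter.biInter_mem (hfin k)]
          intro n hn
          obtain ⟨U, hU, rfl⟩ := (hF k).2.2 hn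
          exact Filter.mem_of_superset (hnb U hU) fun x hx => gauge_le_one _ _ hx
        obtain ⟨V, hV, hsub⟩ := hbase _ hmem
        exact ⟨V, hV, fun n hn x hx => hsub hx n hn⟩
      choose V hVU hV using hV
      have hW := hnb _ (hcat A hA V hVU)
      letI := T
      letI := L0Topology P
      have hc : Continuous fun x : E => pinv ε • x := continuous_const.smul continuous_id
      have hpre : (fun x : E => pinv ε • x) ⁻¹' (concatSet P A V) ∈ nhds (0 : E) := by
        apply hc.continuousAt
        simpa using hW
      refine Filter.mem_of_superset hpre ?_
      intro x hx
      rw [mem_stableBall hfin]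
      intro k n hn
      have hsn : IsL0Seminorm P n := by
        obtain ⟨U, hU, rfl⟩ := (hF k).2.2 hn
        exact gauge_seminorm U _ _ (hprop U hU).2.2.1
      obtain ⟨u, hu, hxu⟩ := hx k
      filter_upwards [hV k n hn u hu, seminorm_local hsn (hA.1 k) hxu, hsn.2.1 (pinv ε) x,
        coe_pinv ε, hε] with ω h1 h2 h3 h4 h5 hω
      have h2 := h2 hω
      rw [h3, h4, abs_of_pos (inv_pos.2 h5)] at h2
      rw [← h2, inv_mul_le_iff₀ h5] at h1
      simpa using h1
    · intro W hW
      obtain ⟨U, hU, hUW⟩ := hbase W hW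
      refine ⟨fun k => if k = 0 then Set.univ else ∅,
        fun _ => {L0Proof.gauge U (hprop U hU).1 (hprop U hU).2.1},
        AEEqFun.const Ω (1 / 2 : ℝ), ?_, ?_, ?_, ?_⟩
      · refine ⟨fun k => by by_cases h : k = 0 <;> simp [h], ?_, ?_⟩
        · intro i j hij
          change Disjoint _ _
          by_cases h : i = 0
          · have : j ≠ 0 := fun h' => hij (h.trans h'.symm)
            simp [this]
          · simp [h]
        · rw [Set.eq_univ_iff_forall]
          intro ω
          exact Set.mem_iUnion.2 ⟨0, by simp⟩
      · intro k
        refine ⟨Set.finite_singleton _, Set.singleton_nonempty _, ?_⟩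
        rintro _ rfl
        exact ⟨U, hU, rfl⟩
      · filter_upwards [AEEqFun.coeFn_const (μ := P) Ω (1 / 2 : ℝ)] with ω h
        rw [h]
        norm_num
      · intro x hx
        apply hUW
        apply mem_of_gauge_lt_one (hprop U hU).1 (hprop U hU).2.1 (hprop U hU).2.2.1
          (hprop U hU).2.2.2
        filter_upwards [hx, AEEqFun.coeFn_const (μ := P) Ω (1 / 2 : ℝ)] with ω h1 h2
        have := h1 0 (by simp) _ rfl
        rw [h2] at this
        refine this.trans_lt ?_
        norm_num
end

section
/- Let E be a stable L^0(F)-module and 𝒫 a family of L^0-seminorms on E, and let 𝒯 be the topology stably induced by 𝒫. Then 𝒯 is stable: for every partition {A_k} of Ω and every sequence {O_k} of nonempty 𝒯-open subsets of E, the set Σ_k 1_{A_k}O_k is 𝒯-open. -/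
open MeasureTheory Filter

open L0Module

theorem L0Module.ind_ae {Ω : Type*} [MeasurableSpace Ω] (P : MeasureTheory.Measure Ω)
    {A : Set Ω} (hA : MeasurableSet A) :
    ∀ᵐ ω ∂P, (ind P A) ω = A.indicator (fun _ => (1 : ℝ)) ω := by
  unfold ind
  rw [dif_pos hA]
  exact MeasureTheory.AEEqFun.coeFn_mk _ _

theorem L0Module.ind_mul_self {Ω : Type*} [MeasurableSpace Ω] (P : MeasureTheory.Measure Ω)
    {A : Set Ω} (hA : MeasurableSet A) : ind P A * ind P A = ind P A := by
  apply MeasureTheory.AEEqFun.ext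
  filter_upwards [MeasureTheory.AEEqFun.coeFn_mul (ind P A) (ind P A), ind_ae P hA] with ω h1 h2
  refine h1.trans ?_
  rw [Pi.mul_apply, h2]
  by_cases h : ω ∈ A <;> simp [h]

/-- Let `E` be a stable `L⁰(F)`-module, `𝒮` a family of `L⁰`-seminorms on
`E` and `𝒯` the topology stably induced by `𝒮` (the sets `U_{{F_k},{A_k},ε}` form a
neighborhood base of `0` and neighborhoods of any point are the translates). Then `𝒯` is
stable: for every partition `{A_k}` and every sequence `{O_k}` of nonempty open sets, the
concatenation `Σ_k 1_{A_k} O_k` is open. -/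
theorem stmt_1 {Ω : Type*} [MeasurableSpace Ω] (P : MeasureTheory.Measure Ω)
    [MeasureTheory.IsProbabilityMeasure P]
    (E : Type*) [AddCommGroup E] [Module (Ω →ₘ[P] ℝ) E]
    (hstable : IsStableModule P E)
    (𝒮 : Set (E → Ω →ₘ[P] ℝ)) (hsemi : ∀ n ∈ 𝒮, IsL0Seminorm P n)
    (T : TopologicalSpace E) (hT : StablyInduced P 𝒮 T)
    (htrans : ∀ x : E, @nhds E T x = Filter.map (fun y => x + y) (@nhds E T 0)) :
    ∀ A : ℕ → Set Ω, IsPartition A → ∀ O : ℕ → Set E,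
      (∀ k, T.IsOpen (O k)) → (∀ k, (O k).Nonempty) →
      T.IsOpen (concatSet P A O) := by
  intro A hA O hO _
  change IsOpen (concatSet P A O)
  rw [isOpen_iff_mem_nhds]
  intro x hx
  choose u huO hu using hx
  have hV : ∀ k, (fun y => u k + y) ⁻¹' (O k) ∈ nhds (0 : E) := by
    intro k
    have h : O k ∈ nhds (u k) := IsOpen.mem_nhds (hO k) (huO k)
    rw [htrans] at h
    exact h
  choose B Fam ε hB hFam hε hsub using fun k => hT.2 _ (hV k)
  obtain ⟨hAm, hAd, hAu⟩ := hA
  have hdis : ∀ {k l : ℕ} {ω : Ω}, ω ∈ A k → ω ∈ A l → k = l := by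
    intro k l ω hk hl
    by_contra hne
    exact Set.disjoint_left.1 (hAd hne) hk hl
  have hBdis : ∀ (i : ℕ) {k l : ℕ} {ω : Ω}, ω ∈ B i k → ω ∈ B i l → k = l := by
    intro i k l ω hk hl
    by_contra hne
    exact Set.disjoint_left.1 ((hB i).2.1 hne) hk hl
  obtain ⟨g, hgm, hg⟩ := exists_measurable_piecewise A hAm (fun k => (ε k : Ω → ℝ))
    (fun k => (ε k).measurable) (by
      intro i j hij ω hω
      exact absurd (hdis hω.1 hω.2) hij)
  let e : Ω →ₘ[P] ℝ := MeasureTheory.AEEqFun.mk g hgm.aestronglyMeasurable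
  have he : ∀ᵐ ω ∂P, e ω = g ω := MeasureTheory.AEEqFun.coeFn_mk _ _
  have hexA : ∀ ω, ∃ k, ω ∈ A k := fun ω => by
    have : ω ∈ ⋃ k, A k := hAu ▸ Set.mem_univ ω
    exact Set.mem_iUnion.1 this
  have hexB : ∀ i ω, ∃ k, ω ∈ B i k := fun i ω => by
    have : ω ∈ ⋃ k, B i k := (hB i).2.2 ▸ Set.mem_univ ω
    exact Set.mem_iUnion.1 this
  let C : ℕ → Set Ω := fun m => A m.unpair.1 ∩ B m.unpair.1 m.unpair.2
  let G : ℕ → Set (E → Ω →ₘ[P] ℝ) := fun m => Fam m.unpair.1 m.unpair.2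
  have hC : IsPartition C := by
    refine ⟨fun m => (hAm _).inter ((hB _).1 _), ?_, ?_⟩
    · intro m m' hne
      refine Set.disjoint_left.2 ?_
      rintro ω ⟨h1, h2⟩ ⟨h3, h4⟩
      have h5 := hdis h1 h3
      rw [← h5] at h4
      have h6 := hBdis _ h2 h4
      apply hne
      rw [← Nat.pair_unpair m, ← Nat.pair_unpair m', h5, h6]
    · refine Set.eq_univ_of_forall fun ω => ?_
      obtain ⟨k, hk⟩ := hexA ω
      obtain ⟨j, hj⟩ := hexB k ω
      refine Set.mem_iUnion.2 ⟨Nat.pair k j, ?_⟩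
      simp only [C, Nat.unpair_pair]
      exact ⟨hk, hj⟩
  have hepos : L0pos P e := by
    have h : ∀ᵐ ω ∂P, ∀ k, 0 < ε k ω := MeasureTheory.ae_all_iff.2 hε
    filter_upwards [he, h] with ω h1 h2
    obtain ⟨k, hk⟩ := hexA ω
    rw [h1, hg k hk]
    exact h2 k
  have hball := hT.1 C G e hC (fun m => hFam _ _) hepos
  rw [htrans x, Filter.mem_map]
  refine Filter.mem_of_superset hball ?_
  intro v hv k
  refine ⟨u k + ind P (A k) • v, ?_, ?_⟩
  · apply hsub k
    have hn : ∀ᵐ ω ∂P, ∀ j, ∀ n ∈ Fam k j, n (ind P (A k) • v) ω = |ind P (A k) ω| * n v ω := by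
      refine MeasureTheory.ae_all_iff.2 fun j => ?_
      refine (MeasureTheory.ae_ball_iff (hFam k j).1.countable).2 fun n hn => ?_
      exact (hsemi n ((hFam k j).2.2 hn)).2.1 _ _
    have hv' : ∀ᵐ ω ∂P, ∀ m, ω ∈ C m → ∀ n ∈ G m, n v ω ≤ e ω := hv
    change ∀ᵐ ω ∂P, ∀ j, ω ∈ B k j → ∀ n ∈ Fam k j, n (ind P (A k) • v) ω ≤ ε k ω
    filter_upwards [hn, hv', he, hε k, ind_ae P (hAm k)] with ω h1 h2 h3 h4 h5 j hj n hnj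
    rw [h1 j n hnj, h5]
    by_cases hω : ω ∈ A k
    · have := h2 (Nat.pair k j) (by simp only [C, Nat.unpair_pair]; exact ⟨hω, hj⟩) n
        (by simp only [G, Nat.unpair_pair]; exact hnj)
      rw [h3, hg k hω] at this
      simpa [hω] using this
    · simpa [hω] using h4.le
  · change ind P (A k) • (x + v) = _
    rw [smul_add, smul_add, smul_smul, ind_mul_self P (hAm k), hu k]
end

section
/- Let E[𝒯] be a topological L^0(F)-module whose topology 𝒯 is stable. Then the topological dual E* := {μ : E → L^0(F) : μ is L^0(F)-linear and continuous} is closed under countable concatenations: for every sequence {μ_k} of continuous L^0(F)-linear maps E → L^0(F) and every partition {A_k} of Ω, the map μ : E → L^0(F) defined by μ(x) := Σ_k 1_{A_k}·μ_k(x) (the element of L^0(F) agreeing a.e. on each A_k with μ_k(x)) is L^0(F)-linear and continuous. -/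
open MeasureTheory Filter

open L0Module

theorem ae_of_partition {Ω : Type*} [MeasurableSpace Ω] {P : MeasureTheory.Measure Ω}
    {A : ℕ → Set Ω} (hA : IsPartition A) {p : Ω → Prop}
    (h : ∀ k, ∀ᵐ ω ∂P, ω ∈ A k → p ω) : ∀ᵐ ω ∂P, p ω := by
  filter_upwards [MeasureTheory.ae_all_iff.2 h] with ω hω
  have : ω ∈ ⋃ k, A k := by rw [hA.2.2]; trivial
  obtain ⟨k, hk⟩ := Set.mem_iUnion.1 this
  exact hω k hk

theorem isOpen_strictBall {Ω : Type*} [MeasurableSpace Ω] (P : MeasureTheory.Measure Ω)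
    (η ε : Ω →ₘ[P] ℝ) :
    (L0Topology P).IsOpen {ξ : Ω →ₘ[P] ℝ | ∀ᵐ ω ∂P, |ξ ω - η ω| < ε ω} := by
  intro ξ hξ
  have hm : MeasureTheory.AEStronglyMeasurable (fun ω => (ε ω - |ξ ω - η ω|) / 2) P := by
    have h1 := ε.aestronglyMeasurable
    have h2 := (ξ.aestronglyMeasurable.sub η.aestronglyMeasurable).norm
    exact ((h1.sub h2).mul_const (2⁻¹ : ℝ)).congr
      (Filter.Eventually.of_forall fun ω => by simp [div_eq_mul_inv])
  have hc := MeasureTheory.AEEqFun.coeFn_mk _ hm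
  refine ⟨MeasureTheory.AEEqFun.mk _ hm, ?_, ?_⟩
  · unfold L0pos
    filter_upwards [hc, hξ] with ω h1 h2
    rw [h1]
    linarith
  · intro ζ hζ
    show ∀ᵐ ω ∂P, |ζ ω - η ω| < ε ω
    filter_upwards [hc, hξ, hζ] with ω h1 h2 h3
    rw [h1] at h3
    have := abs_sub_le (ζ ω) (ξ ω) (η ω)
    linarith

theorem eq_on_of_ind {Ω : Type*} [MeasurableSpace Ω] (P : MeasureTheory.Measure Ω)
    {A : Set Ω} (hA : MeasurableSet A) {f g : Ω →ₘ[P] ℝ} (h : ind P A * f = ind P A * g) :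
    ∀ᵐ ω ∂P, ω ∈ A → f ω = g ω := by
  have hi : ∀ᵐ ω ∂P, ind P A ω = A.indicator (fun _ => (1 : ℝ)) ω := by
    unfold ind
    rw [dif_pos hA]
    exact MeasureTheory.AEEqFun.coeFn_mk _ _
  have h1 := MeasureTheory.AEEqFun.coeFn_mul (ind P A) f
  have h2 := MeasureTheory.AEEqFun.coeFn_mul (ind P A) g
  have h3 : ∀ᵐ ω ∂P, (ind P A * f : Ω →ₘ[P] ℝ) ω = (ind P A * g : Ω →ₘ[P] ℝ) ω := by
    rw [h]; exact Filter.Eventually.of_forall fun _ => rfl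
  filter_upwards [hi, h1, h2, h3] with ω hi h1 h2 h3 hω
  have h4 := h1.symm.trans (h3.trans h2)
  simpa [hi, hω] using h4

/-- Let `E[𝒯]` be a topological `L⁰(F)`-module whose topology `𝒯` is stable.
Then the topological dual is closed under countable concatenations: if `{μ_k}` are continuous
`L⁰`-linear maps `E → L⁰` and `{A_k}` is a partition, then the map `μ = Σ_k 1_{A_k}·μ_k`
(which agrees a.e. on each `A_k` with `μ_k`) is `L⁰`-linear and continuous. -/
theorem stmt_2 {Ω : Type*} [MeasurableSpace Ω] (P : MeasureTheory.Measure Ω)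
    [MeasureTheory.IsProbabilityMeasure P]
    (E : Type*) [AddCommGroup E] [Module (Ω →ₘ[P] ℝ) E]
    (T : TopologicalSpace E)
    (hadd : @ContinuousAdd E T _)
    (hsmul : @ContinuousSMul (Ω →ₘ[P] ℝ) E _ (L0Topology P) T)
    (hstabletop : ∀ A : ℕ → Set Ω, IsPartition A → ∀ O : ℕ → Set E,
      (∀ k, T.IsOpen (O k) ∧ (O k).Nonempty) → T.IsOpen (concatSet P A O))
    (μs : ℕ → E → Ω →ₘ[P] ℝ)
    (hμs_add : ∀ (k : ℕ) (x y : E), μs k (x + y) = μs k x + μs k y)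
    (hμs_smul : ∀ (k : ℕ) (η : Ω →ₘ[P] ℝ) (x : E), μs k (η • x) = η * μs k x)
    (hμs_cont : ∀ k : ℕ, @Continuous E (Ω →ₘ[P] ℝ) T (L0Topology P) (μs k))
    (A : ℕ → Set Ω) (hA : IsPartition A)
    (μ : E → Ω →ₘ[P] ℝ)
    (hμ : ∀ (x : E) (k : ℕ), ∀ᵐ ω ∂P, ω ∈ A k → μ x ω = μs k x ω) :
    (∀ x y : E, μ (x + y) = μ x + μ y) ∧
    (∀ (η : Ω →ₘ[P] ℝ) (x : E), μ (η • x) = η * μ x) ∧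
    @Continuous E (Ω →ₘ[P] ℝ) T (L0Topology P) μ := by
  refine ⟨fun x y => ?_, fun η x => ?_, ?_⟩
  · apply MeasureTheory.AEEqFun.ext
    refine ae_of_partition hA fun k => ?_
    have h0 := hμ (x + y) k
    rw [hμs_add] at h0
    filter_upwards [h0, hμ x k, hμ y k, MeasureTheory.AEEqFun.coeFn_add (μs k x) (μs k y),
      MeasureTheory.AEEqFun.coeFn_add (μ x) (μ y)] with ω h1 h2 h3 h4 h5 hω
    rw [h1 hω, h4, h5, Pi.add_apply, Pi.add_apply, h2 hω, h3 hω]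
  · apply MeasureTheory.AEEqFun.ext
    refine ae_of_partition hA fun k => ?_
    have h0 := hμ (η • x) k
    rw [hμs_smul] at h0
    filter_upwards [h0, hμ x k, MeasureTheory.AEEqFun.coeFn_mul η (μs k x),
      MeasureTheory.AEEqFun.coeFn_mul η (μ x)] with ω h1 h2 h4 h5 hω
    refine (h1 hω).trans (h4.trans (Eq.trans ?_ h5.symm))
    rw [Pi.mul_apply, Pi.mul_apply, h2 hω]
  · refine @Continuous.mk _ _ T (L0Topology P) _ fun O hO => ?_
    refine (@isOpen_iff_forall_mem_open E T _).2 fun x hx => ?_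
    obtain ⟨ε, hε, hb⟩ := (show ∀ η ∈ O, ∃ ε : Ω →ₘ[P] ℝ, L0pos P ε ∧ L0ball P η ε ⊆ O from hO)
      (μ x) hx
    let U : ℕ → Set E := fun k =>
      μs k ⁻¹' {ξ : Ω →ₘ[P] ℝ | ∀ᵐ ω ∂P, |ξ ω - μs k x ω| < ε ω}
    have hxU : ∀ k, x ∈ U k := fun k => by
      show ∀ᵐ ω ∂P, |μs k x ω - μs k x ω| < ε ω
      filter_upwards [hε] with ω h
      simpa using h
    refine ⟨concatSet P A U, ?_, hstabletop A hA U fun k => ⟨?_, x, hxU k⟩, ?_⟩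
    · intro y hy
      apply hb
      refine ae_of_partition hA fun k => ?_
      obtain ⟨u, hu, huy⟩ := hy k
      have he : ind P (A k) * μs k y = ind P (A k) * μs k u := by
        rw [← hμs_smul, ← hμs_smul, huy]
      have hu' : ∀ᵐ ω ∂P, |μs k u ω - μs k x ω| < ε ω := hu
      filter_upwards [eq_on_of_ind P (hA.1 k) he, hu', hμ x k, hμ y k] with ω h1 h2 h3 h4 hω
      rw [h3 hω, h4 hω, h1 hω]
      exact h2.le
    · exact @Continuous.isOpen_preimage _ _ T (L0Topology P) _ (hμs_cont k) _ (isOpen_strictBall P _ _)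
    · exact fun k => ⟨x, hxU k, rfl⟩
end

section
/- Let ρ : L^∞_F(𝓔) → L^0(F) be a convex risk measure. Then its Fenchel conjugate ρ_0^* is local: for every y ∈ L^1(𝓔) and every A ∈ F, one has 1_A·ρ_0^*(y) = 1_A·ρ_0^*(1_A·y) P-a.s. (both sides are F-measurable extended-real-valued functions, with the convention 0·(±∞) = 0). -/
open MeasureTheory Filter

/-- `x ∈ L^∞(𝓔)`: an essentially bounded measurable random variable. -/
def MemLinfty {Ω : Type*} [MeasurableSpace Ω] (P : Measure Ω) (x : Ω → ℝ) : Prop :=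
  Measurable x ∧ ∃ C : ℝ, ∀ᵐ ω ∂P, |x ω| ≤ C

/-- `x ∈ L^∞_F(𝓔) = L⁰(F)·L^∞(𝓔)`: `x = η · x₀` a.e. for some `F`-measurable `η`
and essentially bounded `x₀ ∈ L^∞(𝓔)`. -/
def MemLinftyF {Ω : Type*} [MeasurableSpace Ω] (F : MeasurableSpace Ω) (P : Measure Ω)
    (x : Ω → ℝ) : Prop :=
  ∃ η x₀ : Ω → ℝ, Measurable[F] η ∧ MemLinfty P x₀ ∧ x =ᵐ[P] fun ω => η ω * x₀ ω

/-- A (conditional) convex risk measure `ρ : L^∞_F(𝓔) → L⁰(F)`, represented as a map on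
representatives which respects a.e. equality, takes `F`-measurable values on the domain
`L^∞_F(𝓔)`, and is monotone, `L⁰(F)`-cash-invariant and convex (with real coefficients). -/
structure IsCondRiskMeasure {Ω : Type*} [MeasurableSpace Ω] (F : MeasurableSpace Ω)
    (P : Measure Ω) (ρ : (Ω → ℝ) → Ω → ℝ) : Prop where
  respects_ae : ∀ x y : Ω → ℝ, MemLinftyF F P x → x =ᵐ[P] y → ρ x =ᵐ[P] ρ y
  measurable_val : ∀ x : Ω → ℝ, MemLinftyF F P x → Measurable[F] (ρ x)
  mono : ∀ x y : Ω → ℝ, MemLinftyF F P x → MemLinftyF F P y → x ≤ᵐ[P] y → ρ y ≤ᵐ[P] ρ x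
  cash : ∀ x η : Ω → ℝ, MemLinftyF F P x → Measurable[F] η →
    ρ (fun ω => x ω + η ω) =ᵐ[P] fun ω => ρ x ω - η ω
  convex : ∀ (x y : Ω → ℝ) (r : ℝ), MemLinftyF F P x → MemLinftyF F P y → 0 ≤ r → r ≤ 1 →
    ρ (fun ω => r * x ω + (1 - r) * y ω) ≤ᵐ[P] fun ω => r * ρ x ω + (1 - r) * ρ y ω

/-- `γ` is the least upper bound, with respect to the `P`-a.e. order on `F`-measurable
extended-real-valued functions, of the set `S`. -/
def IsCondLUB {Ω : Type*} [MeasurableSpace Ω] (F : MeasurableSpace Ω) (P : Measure Ω)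
    (S : Set (Ω → EReal)) (γ : Ω → EReal) : Prop :=
  Measurable[F] γ ∧ (∀ g ∈ S, g ≤ᵐ[P] γ) ∧
    ∀ γ' : Ω → EReal, Measurable[F] γ' → (∀ g ∈ S, g ≤ᵐ[P] γ') → γ ≤ᵐ[P] γ'

theorem condLUB_le_on {Ω : Type*} [mE : MeasurableSpace Ω] (F : MeasurableSpace Ω)
    (P : Measure Ω) (A : Set Ω) (hA : MeasurableSet[F] A) (S T : Set (Ω → EReal))
    (γ₁ γ₂ : Ω → EReal) (h₁ : IsCondLUB F P S γ₁) (h₂ : IsCondLUB F P T γ₂)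
    (h : ∀ g ∈ S, ∃ g' ∈ T, ∀ᵐ ω ∂P, ω ∈ A → g ω = g' ω) :
    ∀ᵐ ω ∂P, ω ∈ A → γ₁ ω ≤ γ₂ ω := by
  classical
  have key := h₁.2.2 (A.piecewise γ₂ (fun _ => ⊤))
    (Measurable.piecewise hA h₂.1 measurable_const) (by
      intro g hg
      obtain ⟨g', hg', he⟩ := h g hg
      filter_upwards [he, h₂.2.1 g' hg'] with ω h1 h2
      by_cases hω : ω ∈ A
      · simpa [hω, h1 hω] using h2
      · simp [hω])
  filter_upwards [key] with ω h1 hω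
  simpa [hω] using h1

/-- The Fenchel conjugate `ρ₀^*` of a convex risk measure
`ρ : L^∞_F(𝓔) → L⁰(F)` is local: for every `y ∈ L¹(𝓔)` and `A ∈ F`,
`1_A·ρ₀^*(y) = 1_A·ρ₀^*(1_A·y)` a.s. (as `F`-measurable extended-real functions, with the
convention `0·(±∞) = 0`). Here `γ₁` (resp. `γ₂`) denotes `ρ₀^*(y)` (resp. `ρ₀^*(1_A·y)`),
i.e. the least upper bound of `{E[x·y|F] − ρ(x) : x ∈ L^∞(𝓔)}` (resp. with `1_A·y`). -/
theorem stmt_14 {Ω : Type*} [mE : MeasurableSpace Ω] (F : MeasurableSpace Ω) (hF : F ≤ mE)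
    (P : Measure Ω) [IsProbabilityMeasure P] (ρ : (Ω → ℝ) → Ω → ℝ)
    (hρ : IsCondRiskMeasure F P ρ)
    (y : Ω → ℝ) (hy : Integrable y P) (A : Set Ω) (hA : MeasurableSet[F] A)
    (γ₁ γ₂ : Ω → EReal)
    (h₁ : IsCondLUB F P
      {g | ∃ x : Ω → ℝ, MemLinfty P x ∧
        g = fun ω => ((P[fun ω' => x ω' * y ω' | F]) ω : EReal) - (ρ x ω : EReal)} γ₁)
    (h₂ : IsCondLUB F P
      {g | ∃ x : Ω → ℝ, MemLinfty P x ∧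
        g = fun ω => ((P[fun ω' => x ω' * A.indicator y ω' | F]) ω : EReal) - (ρ x ω : EReal)}
      γ₂) :
    ∀ᵐ ω ∂P, ((A.indicator (fun _ => (1 : ℝ)) ω : ℝ) : EReal) * γ₁ ω =
      ((A.indicator (fun _ => (1 : ℝ)) ω : ℝ) : EReal) * γ₂ ω := by
  have key : ∀ x : Ω → ℝ, MemLinfty P x → ∀ᵐ ω ∂P, ω ∈ A →
      (P[fun ω' => x ω' * y ω' | F]) ω = (P[fun ω' => x ω' * A.indicator y ω' | F]) ω := by
    rintro x ⟨hx, C, hC⟩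
    have hi : Integrable (fun ω' => x ω' * y ω') P :=
      hy.bdd_mul (c := C) hx.aestronglyMeasurable (by simpa [Real.norm_eq_abs] using hC)
    have he : (fun ω' => x ω' * A.indicator y ω') = A.indicator (fun ω' => x ω' * y ω') := by
      funext ω
      by_cases hω : ω ∈ A <;> simp [hω]
    rw [he]
    filter_upwards [condExp_indicator hi hA] with ω h1 hω
    rw [h1, Set.indicator_of_mem hω]
  have l₁ := condLUB_le_on F P A hA _ _ γ₁ γ₂ h₁ h₂ (by
    rintro g ⟨x, hx, rfl⟩
    refine ⟨_, ⟨x, hx, rfl⟩, ?_⟩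
    filter_upwards [key x hx] with ω h1 hω
    rw [h1 hω])
  have l₂ := condLUB_le_on F P A hA _ _ γ₂ γ₁ h₂ h₁ (by
    rintro g ⟨x, hx, rfl⟩
    refine ⟨_, ⟨x, hx, rfl⟩, ?_⟩
    filter_upwards [key x hx] with ω h1 hω
    rw [h1 hω])
  filter_upwards [l₁, l₂] with ω a b
  by_cases hω : ω ∈ A
  · rw [le_antisymm (a hω) (b hω)]
  · simp [hω]
end

section
/- Let {y_n}_{n≥1} be a sequence of real-valued F-measurable random variables on a probability space (Ω, F, P), and suppose limsup_n y_n = y P-a.s. for a real-valued F-measurable random variable y. Then there exists a sequence {ν_m}_{m≥1} of F-measurable ℕ-valued random variables with ν_m < ν_{m+1} P-a.s. for every m, such that the (F-measurable) random variables ω ↦ y_{ν_m(ω)}(ω) converge to y P-a.s. as m → ∞. -/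
open MeasureTheory Filter

/-- If `limsup_n y_n = y` a.s. (limsup taken in the extended reals) for
measurable real random variables `y_n, y`, then there are measurable `ℕ`-valued random
variables `ν_m`, a.s. strictly increasing in `m`, with `y_{ν_m(ω)}(ω) → y(ω)` a.s. -/
theorem stmt_16 {Ω : Type*} [MeasurableSpace Ω] (P : Measure Ω) [IsProbabilityMeasure P]
    (yn : ℕ → Ω → ℝ) (hyn : ∀ n, Measurable (yn n))
    (y : Ω → ℝ) (hy : Measurable y)
    (hlimsup : ∀ᵐ ω ∂P, limsup (fun n => ((yn n ω : ℝ) : EReal)) atTop = ((y ω : ℝ) : EReal)) :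
    ∃ ν : ℕ → Ω → ℕ, (∀ m, Measurable (ν m)) ∧
      (∀ m, ∀ᵐ ω ∂P, ν m ω < ν (m + 1) ω) ∧
      ∀ᵐ ω ∂P, Tendsto (fun m => yn (ν m ω) ω) atTop (nhds (y ω)) := by
  classical
  set A : Set Ω := {ω | ∀ m k : ℕ, ∃ n, k < n ∧ |yn n ω - y ω| < 1 / ((m : ℝ) + 1)} with hA
  have hset : ∀ (m n : ℕ), MeasurableSet {ω | |yn n ω - y ω| < 1 / ((m : ℝ) + 1)} := by
    intro m n
    have h1 : Measurable (fun ω => |yn n ω - y ω|) := by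
      have := ((hyn n).sub hy).norm
      simpa [Real.norm_eq_abs] using this
    exact measurableSet_lt h1 measurable_const
  have hAm : MeasurableSet A := by
    have : A = ⋂ m : ℕ, ⋂ k : ℕ, ⋃ n : ℕ, ⋃ _ : k < n,
        {ω | |yn n ω - y ω| < 1 / ((m : ℝ) + 1)} := by
      ext ω
      simp [hA]
    rw [this]
    exact MeasurableSet.iInter fun m => MeasurableSet.iInter fun k =>
      MeasurableSet.iUnion fun n => MeasurableSet.iUnion fun _ => hset m n
  have hAae : ∀ᵐ ω ∂P, ω ∈ A := by
    filter_upwards [hlimsup] with ω hω m k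
    have hpos : (0 : ℝ) < 1 / ((m : ℝ) + 1) := by positivity
    have h1 : ∀ᶠ n in atTop, ((yn n ω : ℝ) : EReal) < ((y ω + 1 / ((m : ℝ) + 1) : ℝ) : EReal) := by
      apply eventually_lt_of_limsup_lt
      · rw [hω]
        exact EReal.coe_lt_coe_iff.2 (by linarith)
      · isBoundedDefault
    have h2 : ∃ᶠ n in atTop, ((y ω - 1 / ((m : ℝ) + 1) : ℝ) : EReal) < ((yn n ω : ℝ) : EReal) := by
      apply frequently_lt_of_lt_limsup
      · isBoundedDefault
      · rw [hω]
        exact EReal.coe_lt_coe_iff.2 (by linarith)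
    obtain ⟨n, h3, h4, h5⟩ := (h2.and_eventually (h1.and (eventually_gt_atTop k))).exists
    refine ⟨n, h5, ?_⟩
    rw [EReal.coe_lt_coe_iff] at h3 h4
    rw [abs_lt]
    constructor <;> linarith
  have step : ∀ (m : ℕ) (f : {f : Ω → ℕ // Measurable f}), ∃ g : {g : Ω → ℕ // Measurable g},
      ∀ ω, f.1 ω < g.1 ω ∧ (ω ∈ A → |yn (g.1 ω) ω - y ω| < 1 / ((m : ℝ) + 1)) := by
    rintro m ⟨f, hf⟩
    have hex : ∀ ω, ∃ n, f ω < n ∧ (ω ∈ A → |yn n ω - y ω| < 1 / ((m : ℝ) + 1)) := by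
      intro ω
      by_cases h : ω ∈ A
      · obtain ⟨n, h1, h2⟩ := h m (f ω)
        exact ⟨n, h1, fun _ => h2⟩
      · exact ⟨f ω + 1, Nat.lt_succ_self _, fun h' => absurd h' h⟩
    refine ⟨⟨fun ω => Nat.find (hex ω), measurable_find hex ?_⟩, fun ω => Nat.find_spec (hex ω)⟩
    intro n
    have : {ω | f ω < n ∧ (ω ∈ A → |yn n ω - y ω| < 1 / ((m : ℝ) + 1))} =
        {ω | f ω < n} ∩ (Aᶜ ∪ {ω | |yn n ω - y ω| < 1 / ((m : ℝ) + 1)}) := by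
      ext ω
      simp only [Set.mem_ofPred_eq, Set.mem_inter_iff, Set.mem_union, Set.mem_compl_iff]
      tauto
    rw [this]
    exact (measurableSet_lt hf measurable_const).inter (hAm.compl.union (hset m n))
  choose G hG using step
  let F : ℕ → {f : Ω → ℕ // Measurable f} :=
    fun m => Nat.rec ⟨fun _ => 0, measurable_const⟩ (fun k f => G k f) m
  have hF : ∀ m, F (m + 1) = G m (F m) := fun m => rfl
  refine ⟨fun m => (F m).1, fun m => (F m).2, fun m => ae_of_all _ fun ω => ?_, ?_⟩
  · exact (hG m (F m) ω).1
  · filter_upwards [hAae] with ω hω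
    rw [← tendsto_add_atTop_iff_nat 1, tendsto_iff_dist_tendsto_zero]
    refine squeeze_zero (fun _ => dist_nonneg) (fun m => ?_)
      (tendsto_one_div_add_atTop_nhds_zero_nat (𝕜 := ℝ))
    rw [hF, Real.dist_eq]
    exact ((hG m (F m) ω).2 hω).le
end
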